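/- arXiv:2307.09932 — 2 statements merged into one kernel-verified Lean document; each statement's English description precedes it below -/
import Mathlib

section
/- Let κ₁ < κ₂ < κ₃ < κ₄ be reals, let a₁₂ = (κ₁+κ₂)/2, a₃₄ = (κ₃+κ₄)/2 (so a₃₄ > a₁₂), and b₂ = 2(a₁₂ + a₃₄) + (κ₁κ₂ − κ₃κ₄)/(2(a₃₄ − a₁₂)). Then b₂ > κ₁ + 2κ₂ and b₂ < 2κ₃ + κ₄. -/
/-! Passing from `[κ₁, κ₂]` to `[κ₃, κ₄]` through `[κ₂, κ₃]` changes `ω` by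
`(κ₃ - κ₁) (κ₁ + κ₂ + κ₃)` and then by `(κ₄ - κ₂) (κ₂ + κ₃ + κ₄)`. The weights `κ₃ - κ₁` and
`κ₄ - κ₂` add up to `2 (a₃₄ - a₁₂)`, so `b₂ = (ω₃₄ - ω₁₂) / (2 (a₃₄ - a₁₂))` is a weighted mean of
`κ₁ + κ₂ + κ₃` and `κ₂ + κ₃ + κ₄`, which already lie between `κ₁ + 2κ₂` and `2κ₃ + κ₄`. -/

/-- The speed `ω` of the line soliton with parameters `x`, `y`, whose crest is
`X + (x + y) Y = ω t` up to translation; it is the divided difference of the cube at `x` and `y`. -/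
def crestSpeed {R : Type*} [CommRing R] (x y : R) : R :=
  x ^ 2 + x * y + y ^ 2

theorem crestSpeed_sub_crestSpeed {R : Type*} [CommRing R] (x y z : R) :
    crestSpeed y z - crestSpeed x y = (z - x) * (x + y + z) := by
  unfold crestSpeed
  ring

/-- The component `b₂` of the velocity `(b₁, b₂)` with `b₁ + 2a₁₂b₂ = ω₁₂` and
`b₁ + 2a₃₄b₂ = ω₃₄`, obtained by eliminating `b₁`. It has the junk value `0` for parallel crests,
`κ₁ + κ₂ = κ₃ + κ₄`. -/
def transverseSpeed {K : Type*} [Field K] (κ₁ κ₂ κ₃ κ₄ : K) : K :=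
  (crestSpeed κ₃ κ₄ - crestSpeed κ₁ κ₂) / (κ₃ + κ₄ - (κ₁ + κ₂))

theorem transverseSpeed_eq_add_div {K : Type*} [Field K] {κ₁ κ₂ κ₃ κ₄ : K}
    (h : κ₃ + κ₄ - (κ₁ + κ₂) ≠ 0) :
    transverseSpeed κ₁ κ₂ κ₃ κ₄ =
      κ₁ + κ₂ + (κ₃ + κ₄) + (κ₁ * κ₂ - κ₃ * κ₄) / (κ₃ + κ₄ - (κ₁ + κ₂)) := by
  rw [transverseSpeed, add_div' _ _ _ h]
  unfold crestSpeed
  ring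

section Order

variable {K : Type*} [Field K] [LinearOrder K] [IsStrictOrderedRing K]

theorem weighted_mean_mem_Ioo {u v x y : K} (hu : 0 < u) (hv : 0 < v) (hxy : x < y) :
    (u * x + v * y) / (u + v) ∈ Set.Ioo x y := by
  rw [← openSegment_eq_Ioo hxy, mem_openSegment_iff_div]
  refine ⟨u, v, hu, hv, ?_⟩
  simp only [smul_eq_mul]
  ring

theorem transverseSpeed_mem_Ioo {κ₁ κ₂ κ₃ κ₄ : K}
    (h13 : κ₁ < κ₃) (h24 : κ₂ < κ₄) (h14 : κ₁ < κ₄) :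
    transverseSpeed κ₁ κ₂ κ₃ κ₄ ∈ Set.Ioo (κ₁ + κ₂ + κ₃) (κ₂ + κ₃ + κ₄) := by
  have telescope : crestSpeed κ₃ κ₄ - crestSpeed κ₁ κ₂ =
      (κ₃ - κ₁) * (κ₁ + κ₂ + κ₃) + (κ₄ - κ₂) * (κ₂ + κ₃ + κ₄) := by
    rw [← crestSpeed_sub_crestSpeed, ← crestSpeed_sub_crestSpeed, add_comm, sub_add_sub_cancel]
  have weights : κ₃ + κ₄ - (κ₁ + κ₂) = (κ₃ - κ₁) + (κ₄ - κ₂) := add_sub_add_comm ..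
  rw [transverseSpeed, telescope, weights]
  exact weighted_mean_mem_Ioo (sub_pos.2 h13) (sub_pos.2 h24) (by linarith)

theorem b2_bounds_O_type_general {κ₁ κ₂ κ₃ κ₄ a₁₂ a₃₄ b₂ : K}
    (h13 : κ₁ < κ₃) (h24 : κ₂ < κ₄) (h14 : κ₁ < κ₄)
    (ha12 : a₁₂ = (κ₁ + κ₂) / 2) (ha34 : a₃₄ = (κ₃ + κ₄) / 2)
    (hb₂ : b₂ = 2 * (a₁₂ + a₃₄) + (κ₁ * κ₂ - κ₃ * κ₄) / (2 * (a₃₄ - a₁₂))) :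
    b₂ ∈ Set.Ioo (κ₁ + κ₂ + κ₃) (κ₂ + κ₃ + κ₄) := by
  have two_a12 : 2 * a₁₂ = κ₁ + κ₂ := by rw [ha12, mul_div_cancel₀ _ two_ne_zero]
  have two_a34 : 2 * a₃₄ = κ₃ + κ₄ := by rw [ha34, mul_div_cancel₀ _ two_ne_zero]
  have not_parallel : κ₃ + κ₄ - (κ₁ + κ₂) ≠ 0 := by linarith
  rw [hb₂, mul_add, mul_sub, two_a12, two_a34, ← transverseSpeed_eq_add_div not_parallel]
  exact transverseSpeed_mem_Ioo h13 h24 h14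

end Order

/-- bounds on the transverse speed b₂ for O-type 2-line solitons. -/
theorem b2_bounds_O_type
    (κ₁ κ₂ κ₃ κ₄ a₁₂ a₃₄ b₂ : ℝ)
    (h12 : κ₁ < κ₂) (h23 : κ₂ < κ₃) (h34 : κ₃ < κ₄)
    (ha12 : a₁₂ = (κ₁ + κ₂)/2) (ha34 : a₃₄ = (κ₃ + κ₄)/2)
    (hb₂ : b₂ = 2*(a₁₂ + a₃₄) + (κ₁*κ₂ - κ₃*κ₄)/(2*(a₃₄ - a₁₂))) :
    κ₁ + 2*κ₂ < b₂ ∧ b₂ < 2*κ₃ + κ₄ := by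
  obtain ⟨lower, upper⟩ := b2_bounds_O_type_general (by linarith) (by linarith) (by linarith)
    ha12 ha34 hb₂
  exact ⟨by linarith, by linarith⟩
end

section
/- Let c > 0. Define u₀(z) := 2c·sech²(√c z), and for μ ∈ ℂ with |Im μ| < c let γ(μ) be the principal square root of c + iμ, g(z,μ) := (√c/γ(μ))·∂_z²(e^{−γ(μ)z} sech(√c z)) and g_M(z,μ) := (√c/γ(μ))·∂_z(e^{−γ(μ)z} sech(√c z)). Then ∂_z g_M(z,μ) = g(z,μ) and, for all z ∈ ℝ and all μ ∈ ℂ with |Im μ| < c, −(1/4)∂_z(∂_z²g(z,μ) − 4c·g(z,μ) + 6u₀(z)g(z,μ)) + (3/4)μ²·g_M(z,μ) = iμ·γ(μ)·g(z,μ). -/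
/-- principal square root of c + iμ -/
noncomputable def gamC (c : ℝ) (μ : ℂ) : ℂ := ((c : ℂ) + Complex.I * μ) ^ ((1 : ℂ)/2)

/-- g(z,μ) = (√c/γ(μ)) ∂_z²(e^{−γ(μ)z} sech(√c z)) -/
noncomputable def gFun (c : ℝ) (μ : ℂ) (z : ℝ) : ℂ :=
  ((Real.sqrt c : ℂ) / gamC c μ) *
    deriv (deriv fun w : ℝ =>
      Complex.exp (-gamC c μ * (w : ℂ)) * ((Real.cosh (Real.sqrt c * w) : ℝ) : ℂ)⁻¹) z

/-- g_M(z,μ) = (√c/γ(μ)) ∂_z(e^{−γ(μ)z} sech(√c z)) -/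
noncomputable def gMFun (c : ℝ) (μ : ℂ) (z : ℝ) : ℂ :=
  ((Real.sqrt c : ℂ) / gamC c μ) *
    deriv (fun w : ℝ =>
      Complex.exp (-gamC c μ * (w : ℂ)) * ((Real.cosh (Real.sqrt c * w) : ℝ) : ℂ)⁻¹) z

/-!
Write `φ = e^{-γz} sech(kz)`, `v = k tanh(kz)`, `γ² = c + iμ` and `k² = c`. Up to a common factor
`g = ∂²φ` and `g_M = ∂φ`, so the relation is the derivative of
`∂⁴φ - 4c ∂²φ + 6u₀ ∂²φ = -3(iμ)² φ - 4iμγ ∂φ`, multiplied by `-1/4`. This in turn is an algebraic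
identity: the equations `∂φ = -(γ + v)φ` and `∂v = c - v² = u₀/2` express every derivative of `φ`
as a polynomial in `v` times `φ`.
-/

/-- The stationary kink `v = k tanh(kz)`: the solution of the Riccati equation `∂v = k² - v²` which
gives the soliton as `u₀ = 2∂v`. It is cast to `ℂ`, where the modes take their values. -/
noncomputable def kink (k z : ℝ) : ℂ := ((k * Real.tanh (k * z) : ℝ) : ℂ)

/-- The generating function `φ = e^{-γz} sech(kz)`: up to a constant factor, the resonant mode is
`∂²φ` and its antiderivative is `∂φ`. -/
noncomputable def sechWave (γ : ℂ) (k z : ℝ) : ℂ :=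
  Complex.exp (-γ * (z : ℂ)) * ((Real.cosh (k * z) : ℝ) : ℂ)⁻¹

lemma gamC_sq (c : ℝ) (μ : ℂ) : gamC c μ ^ 2 = c + Complex.I * μ := by
  rw [gamC, one_div]
  exact_mod_cast Complex.cpow_nat_inv_pow ((c : ℂ) + Complex.I * μ) two_ne_zero

lemma one_sub_tanh_sq (x : ℝ) : 1 - Real.tanh x ^ 2 = (Real.cosh x ^ 2)⁻¹ := by
  have h_cosh : Real.cosh x ≠ 0 := (Real.cosh_pos x).ne'
  rw [Real.tanh_eq_sinh_div_cosh]
  field_simp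
  rw [Real.cosh_sq, add_sub_cancel_left]

lemma hasDerivAt_tanh (x : ℝ) : HasDerivAt Real.tanh (1 - Real.tanh x ^ 2) x := by
  have h_cosh : Real.cosh x ≠ 0 := (Real.cosh_pos x).ne'
  rw [funext Real.tanh_eq_sinh_div_cosh]
  refine ((Real.hasDerivAt_sinh x).fun_div (Real.hasDerivAt_cosh x) h_cosh).congr_deriv ?_
  field_simp

lemma sq_sub_kink_sq (k z : ℝ) :
    (k : ℂ) ^ 2 - kink k z ^ 2 = ((k ^ 2 / Real.cosh (k * z) ^ 2 : ℝ) : ℂ) := by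
  rw [div_eq_mul_inv, ← one_sub_tanh_sq, kink]
  push_cast
  ring

lemma hasDerivAt_kink (k z : ℝ) : HasDerivAt (kink k) ((k : ℂ) ^ 2 - kink k z ^ 2) z := by
  have h_tanh := (hasDerivAt_tanh (k * z)).comp z (hasDerivAt_const_mul k)
  refine (h_tanh.const_mul k).ofReal_comp.congr_deriv ?_
  rw [kink]
  push_cast
  ring

lemma hasDerivAt_sechWave (γ : ℂ) (k z : ℝ) :
    HasDerivAt (sechWave γ k) (-(γ + kink k z) * sechWave γ k z) z := by
  have h_cosh : ((Real.cosh (k * z) : ℝ) : ℂ) ≠ 0 :=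
    Complex.ofReal_ne_zero.mpr (Real.cosh_pos _).ne'
  have h_exp : HasDerivAt (fun w : ℝ => Complex.exp (-γ * (w : ℂ)))
      (Complex.exp (-γ * (z : ℂ)) * -γ) z := by
    simpa using ((hasDerivAt_id z).ofReal_comp.const_mul (-γ)).cexp
  have h_sech := (hasDerivAt_const_mul (x := z) k).cosh.ofReal_comp.fun_inv h_cosh
  refine (h_exp.mul h_sech).congr_deriv ?_
  simp only [sechWave, kink, Real.tanh_eq_sinh_div_cosh]
  push_cast
  ring

lemma deriv_sechWave (γ : ℂ) (k : ℝ) :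
    deriv (sechWave γ k) = fun z => -(γ + kink k z) * sechWave γ k z :=
  funext fun z => (hasDerivAt_sechWave γ k z).deriv

/-- Equivalently `∂²φ + 2v ∂φ = (γ² - k²)φ`, which holds because `cosh(kz) φ` is an exponential. -/
lemma hasDerivAt_deriv_sechWave (γ : ℂ) (k z : ℝ) :
    HasDerivAt (deriv (sechWave γ k))
      ((γ ^ 2 - k ^ 2) * sechWave γ k z - 2 * kink k z * deriv (sechWave γ k) z) z := by
  rw [deriv_sechWave]
  refine (((hasDerivAt_kink k z).const_add γ).fun_neg.mul
    (hasDerivAt_sechWave γ k z)).congr_deriv ?_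
  ring

lemma deriv_deriv_sechWave (γ : ℂ) (k : ℝ) :
    deriv (deriv (sechWave γ k)) = fun z =>
      (γ ^ 2 - k ^ 2) * sechWave γ k z - 2 * kink k z * deriv (sechWave γ k) z :=
  funext fun z => (hasDerivAt_deriv_sechWave γ k z).deriv

lemma hasDerivAt_deriv_deriv_sechWave (γ : ℂ) (k z : ℝ) :
    HasDerivAt (deriv (deriv (sechWave γ k)))
      ((γ ^ 2 - k ^ 2 - 2 * (k ^ 2 - kink k z ^ 2)) * deriv (sechWave γ k) z
        - 2 * kink k z * deriv (deriv (sechWave γ k)) z) z := by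
  have h_wave := (hasDerivAt_sechWave γ k z).differentiableAt.hasDerivAt
  have h_deriv := (hasDerivAt_deriv_sechWave γ k z).differentiableAt.hasDerivAt
  have h_leibniz := (h_wave.const_mul (γ ^ 2 - k ^ 2 : ℂ)).fun_sub
    (((hasDerivAt_kink k z).const_mul 2).fun_mul h_deriv)
  rw [← deriv_deriv_sechWave] at h_leibniz
  exact h_leibniz.congr_deriv (by ring)

lemma deriv_deriv_deriv_sechWave (γ : ℂ) (k : ℝ) :
    deriv (deriv (deriv (sechWave γ k))) = fun z =>
      (γ ^ 2 - k ^ 2 - 2 * (k ^ 2 - kink k z ^ 2)) * deriv (sechWave γ k) z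
        - 2 * kink k z * deriv (deriv (sechWave γ k)) z :=
  funext fun z => (hasDerivAt_deriv_deriv_sechWave γ k z).deriv

lemma hasDerivAt_deriv_deriv_deriv_sechWave (γ : ℂ) (k z : ℝ) :
    HasDerivAt (deriv (deriv (deriv (sechWave γ k))))
      (4 * kink k z * (k ^ 2 - kink k z ^ 2) * deriv (sechWave γ k) z
        + (γ ^ 2 - k ^ 2 - 4 * (k ^ 2 - kink k z ^ 2)) * deriv (deriv (sechWave γ k)) z
        - 2 * kink k z * deriv (deriv (deriv (sechWave γ k))) z) z := by
  have h_kink := hasDerivAt_kink k z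
  have h_deriv := (hasDerivAt_deriv_sechWave γ k z).differentiableAt.hasDerivAt
  have h_deriv₂ := (hasDerivAt_deriv_deriv_sechWave γ k z).differentiableAt.hasDerivAt
  have h_coeff := (((h_kink.fun_pow 2).const_sub ((k : ℂ) ^ 2)).const_mul 2).const_sub
    (γ ^ 2 - k ^ 2 : ℂ)
  have h_leibniz := (h_coeff.fun_mul h_deriv).fun_sub ((h_kink.const_mul 2).fun_mul h_deriv₂)
  rw [← deriv_deriv_deriv_sechWave] at h_leibniz
  exact h_leibniz.congr_deriv (by ring)

lemma sechWave_integrated_relation (γ : ℂ) (k z : ℝ) :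
    deriv (deriv (deriv (deriv (sechWave γ k)))) z
        - 4 * (k : ℂ) ^ 2 * deriv (deriv (sechWave γ k)) z
        + 12 * ((k : ℂ) ^ 2 - kink k z ^ 2) * deriv (deriv (sechWave γ k)) z
      = -3 * (γ ^ 2 - k ^ 2) ^ 2 * sechWave γ k z
        - 4 * (γ ^ 2 - k ^ 2) * γ * deriv (sechWave γ k) z := by
  rw [(hasDerivAt_deriv_deriv_deriv_sechWave γ k z).deriv, deriv_deriv_deriv_sechWave,
    deriv_deriv_sechWave, deriv_sechWave]
  ring

theorem resonant_eigenfunction_relation_general {c k : ℝ} {γ μ : ℂ} (hk : k ^ 2 = c)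
    (hγ : γ ^ 2 = c + Complex.I * μ) (a : ℂ) (z : ℝ) :
    let g : ℝ → ℂ := fun w => a * deriv (deriv (sechWave γ k)) w
    let gM : ℝ → ℂ := fun w => a * deriv (sechWave γ k) w
    deriv gM z = g z
      ∧ -(1 / 4 : ℂ) * deriv (fun w : ℝ =>
            deriv (deriv g) w - 4 * (c : ℂ) * g w
              + 6 * ((2 * c / Real.cosh (k * w) ^ 2 : ℝ) : ℂ) * g w) z
          + (3 / 4 : ℂ) * μ ^ 2 * gM z
        = Complex.I * μ * γ * g z := by
  intro g gM
  refine ⟨deriv_const_mul_field a, ?_⟩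
  have h_eigenvalue : γ ^ 2 - (k : ℂ) ^ 2 = Complex.I * μ := by
    rw [hγ, ← hk]
    push_cast
    ring
  have h_integrated : (fun w : ℝ => deriv (deriv g) w - 4 * (c : ℂ) * g w
        + 6 * ((2 * c / Real.cosh (k * w) ^ 2 : ℝ) : ℂ) * g w)
      = fun w => 3 * a * μ ^ 2 * sechWave γ k w
        - 4 * Complex.I * μ * γ * a * deriv (sechWave γ k) w := by
    funext w
    have h_relation := sechWave_integrated_relation γ k w
    rw [sq_sub_kink_sq, h_eigenvalue, mul_pow, Complex.I_sq] at h_relation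
    simp only [g, deriv_const_mul_field', ← hk]
    push_cast at h_relation ⊢
    linear_combination a * h_relation
  have h_wave := (hasDerivAt_sechWave γ k z).differentiableAt.hasDerivAt
  have h_deriv := (hasDerivAt_deriv_sechWave γ k z).differentiableAt.hasDerivAt
  rw [h_integrated, ((h_wave.const_mul _).fun_sub (h_deriv.const_mul _)).deriv]
  simp only [g, gM]
  ring

/-- resonant continuous eigenfunction relation for the
linearized KP-II operator around the line soliton u₀ = 2c sech²(√c z). -/
theorem resonant_eigenfunction_relation (c : ℝ) (hc : 0 < c) :
    ∀ (μ : ℂ) (z : ℝ), |μ.im| < c →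
      deriv (gMFun c μ) z = gFun c μ z
      ∧ -(1/4 : ℂ) * deriv (fun w : ℝ =>
            deriv (deriv (gFun c μ)) w - 4*(c : ℂ)*gFun c μ w
              + 6*((2*c/(Real.cosh (Real.sqrt c * w))^2 : ℝ) : ℂ) * gFun c μ w) z
          + (3/4 : ℂ) * μ^2 * gMFun c μ z
        = Complex.I * μ * gamC c μ * gFun c μ z :=
  fun μ z _ => resonant_eigenfunction_relation_general (Real.sq_sqrt hc.le) (gamC_sq c μ)
    (Real.sqrt c / gamC c μ) z
end
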